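/- arXiv:1401.2375 — 4 statements merged into one kernel-verified Lean document; each statement's English description precedes it below -/
import Mathlib

section
/- Let c_0, c_1, c_2, c_3 and u, ν, μ be real analytic on an open interval I with u, μ nowhere vanishing. Define γ_0 = (c_0 + 3c_1ν + 3c_2ν² + c_3ν³ − ν')/(μu), γ_1 = (c_1 + 2c_2ν + c_3ν²)/μ − u'/(3μu), γ_2 = u(c_2 + c_3ν)/μ, γ_3 = u²c_3/μ, and D := μ⁻¹ d/dx. Then the transformed invariant (s_3)_1 := γ_0γ_3² − 3γ_1γ_2γ_3 + 2γ_2³ + γ_3·Dγ_2 − γ_2·Dγ_3 satisfies (s_3)_1 = (u/μ)³ · s_3 on I, where s_3 = c_0c_3² − 3c_1c_2c_3 + 2c_2³ + c_3c_2' − c_2c_3'. -/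
open Set

/-- The transformed coefficient `γ₀` under `y = uη + ν`, `dξ/dx = μ`. -/
noncomputable def gam0 (c0 c1 c2 c3 u v m : ℝ → ℝ) : ℝ → ℝ := fun x =>
  (c0 x + 3 * c1 x * v x + 3 * c2 x * (v x) ^ 2 + c3 x * (v x) ^ 3 - deriv v x) / (m x * u x)

/-- The transformed coefficient `γ₁`. -/
noncomputable def gam1 (c1 c2 c3 u v m : ℝ → ℝ) : ℝ → ℝ := fun x =>
  (c1 x + 2 * c2 x * v x + c3 x * (v x) ^ 2) / m x - deriv u x / (3 * m x * u x)

/-- The transformed coefficient `γ₂`. -/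
noncomputable def gam2 (c2 c3 u v m : ℝ → ℝ) : ℝ → ℝ := fun x =>
  u x * (c2 x + c3 x * v x) / m x

/-- The transformed coefficient `γ₃`. -/
noncomputable def gam3 (c3 u m : ℝ → ℝ) : ℝ → ℝ := fun x =>
  (u x) ^ 2 * c3 x / m x

/-- The relative invariant `s₃ = c₀c₃² − 3c₁c₂c₃ + 2c₂³ + c₃c₂′ − c₂c₃′`. -/
noncomputable def s3 (c0 c1 c2 c3 : ℝ → ℝ) : ℝ → ℝ := fun x =>
  c0 x * (c3 x) ^ 2 - 3 * c1 x * c2 x * c3 x + 2 * (c2 x) ^ 3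
    + c3 x * deriv c2 x - c2 x * deriv c3 x

/-- `s₃` built from coefficients `g0,…,g3`, with the derivative `d/dξ = μ⁻¹ d/dx`. -/
noncomputable def s3D (g0 g1 g2 g3 m : ℝ → ℝ) : ℝ → ℝ := fun x =>
  g0 x * (g3 x) ^ 2 - 3 * g1 x * g2 x * g3 x + 2 * (g2 x) ^ 3
    + g3 x * ((m x)⁻¹ * deriv g2 x) - g2 x * ((m x)⁻¹ * deriv g3 x)

/-!
Write `s₃` as the constant term `c₀c₃² − 3c₁c₂c₃ + 2c₂³` of the depressed cubic plus the Wronskian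
`c₃c₂′ − c₂c₃′`. If the coefficients transformed as those of a cubic polynomial, the first summand
would be shift-invariant and scale by `(u/μ)³`; the terms `−ν′` in `γ₀` and `−u′/(3u)` in `γ₁` add
the defect `(u/μ)³ (−c₃²ν′ + (u′/u) c₃(c₂ + c₃ν))`. Since `γ₃ = (u/μ) · uc₃` and
`γ₂ = (u/μ) · (c₂ + c₃ν)`, the Wronskian also scales by `(u/μ)³`, up to exactly the opposite defect.
-/

section DepressedCubic

/-- The constant term of the depressed form of the cubic `a₀ + 3a₁y + 3a₂y² + a₃y³`: with
`z = a₃y + a₂`, multiplying the cubic by `a₃²` gives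
`z³ + 3(a₁a₃ − a₂²)z + depressedConstant a₀ a₁ a₂ a₃`. It is the derivative-free part of `s₃`. -/
def depressedConstant {R : Type*} [CommRing R] (a₀ a₁ a₂ a₃ : R) : R :=
  a₀ * a₃ ^ 2 - 3 * a₁ * a₂ * a₃ + 2 * a₂ ^ 3

theorem depressedConstant_shift {R : Type*} [CommRing R] (a₀ a₁ a₂ a₃ t : R) :
    depressedConstant (a₀ + 3 * a₁ * t + 3 * a₂ * t ^ 2 + a₃ * t ^ 3)
      (a₁ + 2 * a₂ * t + a₃ * t ^ 2) (a₂ + a₃ * t) a₃ = depressedConstant a₀ a₁ a₂ a₃ := by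
  unfold depressedConstant
  ring

theorem depressedConstant_sub_sub {R : Type*} [CommRing R] (a₀ a₁ a₂ a₃ p q : R) :
    depressedConstant (a₀ - p) (a₁ - q) a₂ a₃ =
      depressedConstant a₀ a₁ a₂ a₃ - p * a₃ ^ 2 + 3 * q * a₂ * a₃ := by
  unfold depressedConstant
  ring

theorem depressedConstant_scale {K : Type*} [Field K] (a₀ a₁ a₂ a₃ m : K) {u : K} (hu : u ≠ 0) :
    depressedConstant (a₀ / (m * u)) (a₁ / m) (u * a₂ / m) (u ^ 2 * a₃ / m) =
      (u / m) ^ 3 * depressedConstant a₀ a₁ a₂ a₃ := by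
  unfold depressedConstant
  field_simp

end DepressedCubic

section Wronskian

variable {𝕜 : Type*} [NontriviallyNormedField 𝕜] {f g h : 𝕜 → 𝕜} {x : 𝕜}

/-- The Wronskian `f g′ − f′ g` of two functions of one variable. The derivative part of `s₃` is
`wronskian c₃ c₂`. -/
noncomputable def wronskian (f g : 𝕜 → 𝕜) (x : 𝕜) : 𝕜 :=
  f x * deriv g x - deriv f x * g x

theorem wronskian_mul_mul (hh : DifferentiableAt 𝕜 h x) (hf : DifferentiableAt 𝕜 f x)
    (hg : DifferentiableAt 𝕜 g x) :
    wronskian (h * f) (h * g) x = h x ^ 2 * wronskian f g x := by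
  simp only [wronskian, deriv_mul hh hf, deriv_mul hh hg, Pi.mul_apply]
  ring

theorem wronskian_mul_left (hh : DifferentiableAt 𝕜 h x) (hf : DifferentiableAt 𝕜 f x) :
    wronskian (h * f) g x = h x * wronskian f g x - deriv h x * f x * g x := by
  simp only [wronskian, deriv_mul hh hf, Pi.mul_apply]
  ring

theorem wronskian_add_mul_right (hf : DifferentiableAt 𝕜 f x) (hg : DifferentiableAt 𝕜 g x)
    (hh : DifferentiableAt 𝕜 h x) :
    wronskian f (g + f * h) x = wronskian f g x + f x ^ 2 * deriv h x := by
  simp only [wronskian, deriv_add hg (hf.mul hh), deriv_mul hf hh, Pi.add_apply, Pi.mul_apply]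
  ring

end Wronskian

section RelativeInvariant

variable {c2 c3 u v m : ℝ → ℝ} {x : ℝ}

theorem s3_eq_depressedConstant_add_wronskian (c0 c1 c2 c3 : ℝ → ℝ) (x : ℝ) :
    s3 c0 c1 c2 c3 x =
      depressedConstant (c0 x) (c1 x) (c2 x) (c3 x) + wronskian c3 c2 x := by
  unfold s3 depressedConstant wronskian
  ring

theorem s3D_eq_depressedConstant_add_wronskian (g0 g1 g2 g3 m : ℝ → ℝ) (x : ℝ) :
    s3D g0 g1 g2 g3 m x =
      depressedConstant (g0 x) (g1 x) (g2 x) (g3 x) + (m x)⁻¹ * wronskian g3 g2 x := by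
  unfold s3D depressedConstant wronskian
  ring

theorem depressedConstant_gam (c0 c1 c2 c3 v m : ℝ → ℝ) (hu0 : u x ≠ 0) :
    depressedConstant (gam0 c0 c1 c2 c3 u v m x) (gam1 c1 c2 c3 u v m x)
        (gam2 c2 c3 u v m x) (gam3 c3 u m x) =
      (u x / m x) ^ 3 * (depressedConstant (c0 x) (c1 x) (c2 x) (c3 x)
        - c3 x ^ 2 * deriv v x + deriv u x / u x * c3 x * (c2 x + c3 x * v x)) := by
  have gam1_eq : gam1 c1 c2 c3 u v m x =
      (c1 x + 2 * c2 x * v x + c3 x * v x ^ 2 - deriv u x / (3 * u x)) / m x := by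
    unfold gam1
    ring
  rw [gam1_eq, gam0, gam2, gam3, depressedConstant_scale _ _ _ _ _ hu0,
    depressedConstant_sub_sub, depressedConstant_shift]
  ring

theorem wronskian_gam (hc2 : DifferentiableAt ℝ c2 x) (hc3 : DifferentiableAt ℝ c3 x)
    (hu : DifferentiableAt ℝ u x) (hv : DifferentiableAt ℝ v x) (hm : DifferentiableAt ℝ m x)
    (hu0 : u x ≠ 0) (hm0 : m x ≠ 0) :
    (m x)⁻¹ * wronskian (gam3 c3 u m) (gam2 c2 c3 u v m) x =
      (u x / m x) ^ 3 * (wronskian c3 c2 x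
        + c3 x ^ 2 * deriv v x - deriv u x / u x * c3 x * (c2 x + c3 x * v x)) := by
  have gam3_eq : gam3 c3 u m = (u / m) * (u * c3) := by
    ext y
    simp only [gam3, Pi.mul_apply, Pi.div_apply]
    ring
  have gam2_eq : gam2 c2 c3 u v m = (u / m) * (c2 + c3 * v) := by
    ext y
    simp only [gam2, Pi.mul_apply, Pi.div_apply, Pi.add_apply]
    ring
  rw [gam3_eq, gam2_eq,
    wronskian_mul_mul (hu.div hm hm0) (hu.mul hc3) (hc2.add (hc3.mul hv)),
    wronskian_mul_left hu hc3, wronskian_add_mul_right hc3 hc2 hv]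
  simp only [Pi.div_apply, Pi.add_apply, Pi.mul_apply]
  field_simp

theorem s3_relative_invariant_general (c0 c1 : ℝ → ℝ)
    (hc2 : DifferentiableAt ℝ c2 x) (hc3 : DifferentiableAt ℝ c3 x)
    (hu : DifferentiableAt ℝ u x) (hv : DifferentiableAt ℝ v x) (hm : DifferentiableAt ℝ m x)
    (hu0 : u x ≠ 0) (hm0 : m x ≠ 0) :
    s3D (gam0 c0 c1 c2 c3 u v m) (gam1 c1 c2 c3 u v m)
        (gam2 c2 c3 u v m) (gam3 c3 u m) m x
      = (u x / m x) ^ 3 * s3 c0 c1 c2 c3 x := by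
  rw [s3D_eq_depressedConstant_add_wronskian, s3_eq_depressedConstant_add_wronskian,
    depressedConstant_gam c0 c1 c2 c3 v m hu0, wronskian_gam hc2 hc3 hu hv hm hu0 hm0]
  ring

end RelativeInvariant

/-- `s₃` is a relative invariant of weight 3:
`(s₃)₁ = (u/μ)³ · s₃` under the pseudo-group `y = uη + ν`, `dξ/dx = μ`. -/
theorem s3_relative_invariant
    (a b : ℝ) (c0 c1 c2 c3 u v m : ℝ → ℝ)
    (hc0 : AnalyticOnNhd ℝ c0 (Ioo a b)) (hc1 : AnalyticOnNhd ℝ c1 (Ioo a b))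
    (hc2 : AnalyticOnNhd ℝ c2 (Ioo a b)) (hc3 : AnalyticOnNhd ℝ c3 (Ioo a b))
    (hu : AnalyticOnNhd ℝ u (Ioo a b)) (hv : AnalyticOnNhd ℝ v (Ioo a b))
    (hm : AnalyticOnNhd ℝ m (Ioo a b))
    (hu0 : ∀ x ∈ Ioo a b, u x ≠ 0) (hm0 : ∀ x ∈ Ioo a b, m x ≠ 0) :
    ∀ x ∈ Ioo a b,
      s3D (gam0 c0 c1 c2 c3 u v m) (gam1 c1 c2 c3 u v m)
          (gam2 c2 c3 u v m) (gam3 c3 u m) m x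
        = (u x / m x) ^ 3 * s3 c0 c1 c2 c3 x := fun x hx ↦
  s3_relative_invariant_general c0 c1 (hc2 x hx).differentiableAt (hc3 x hx).differentiableAt
    (hu x hx).differentiableAt (hv x hx).differentiableAt (hm x hx).differentiableAt
    (hu0 x hx) (hm0 x hx)
end

section
/- Let c_0, c_1, c_2, c_3 be real analytic on an open interval I with c_3 nowhere vanishing, let u, ν, μ be real analytic с u, μ nowhere vanishing, and let γ_i be the transformed coefficients of the Abel equation. Let U be real analytic, nowhere vanishing, with U' = ((c_3' + 3(c_1c_3 − c_2²))/c_3)·U, and set Ũ := U/u. Then the absolute invariant is preserved: (s_3)_1/(γ_3·Ũ)³ = s_3/(c_3·U)³ on I, i.e. J_1 = J. -/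
open Set

/-!
The curve `y = -c₂/c₃` is where the right-hand side `c₀ + 3c₁y + 3c₂y² + c₃y³` has vanishing
second `y`-derivative, and `s₃ = c₃² δ`, where `δ` is the amount by which this curve fails to solve
the Abel equation. An affine substitution `y = uη + ν` carries inflection points to inflection
points and divides defects by `μu`, while `γ₃ = u²c₃/μ`. Hence `s₃` is multiplied by
`(u²/μ)² / (μu) = (u/μ)³`, exactly as the cube of `c₃U` is when `U` becomes `U/u`.
-/

open scoped Topology

/-- The defect `c₀ + 3c₁y + 3c₂y² + c₃y³ - Dy`, with `D = m⁻¹ d/dx`, by which a curve `y` fails to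
solve the Abel equation with coefficients `c₀, …, c₃`. Taking `m = 1` gives the equation in the
variable `x` itself. -/
noncomputable def abelDefect (c0 c1 c2 c3 m y : ℝ → ℝ) : ℝ → ℝ := fun x =>
  c0 x + 3 * c1 x * y x + 3 * c2 x * (y x) ^ 2 + c3 x * (y x) ^ 3 - (m x)⁻¹ * deriv y x

/-- The curve `y = -c₂/c₃` of inflection points of the cubic `y ↦ c₀ + 3c₁y + 3c₂y² + c₃y³`; it
takes the junk value `0` where `c₃` vanishes. -/
noncomputable def inflectionCurve (c2 c3 : ℝ → ℝ) : ℝ → ℝ := fun x => -c2 x / c3 x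

section

variable {c0 c1 c2 c3 u v m : ℝ → ℝ} {x : ℝ}

lemma hasDerivAt_inflectionCurve (hc2 : DifferentiableAt ℝ c2 x) (hc3 : DifferentiableAt ℝ c3 x)
    (hc3x : c3 x ≠ 0) :
    HasDerivAt (inflectionCurve c2 c3)
      ((-deriv c2 x * c3 x - -c2 x * deriv c3 x) / (c3 x) ^ 2) x :=
  hc2.hasDerivAt.fun_neg.fun_div hc3.hasDerivAt hc3x

lemma s3D_eq_sq_mul_abelDefect (hc2 : DifferentiableAt ℝ c2 x) (hc3 : DifferentiableAt ℝ c3 x)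
    (hc3x : c3 x ≠ 0) :
    s3D c0 c1 c2 c3 m x =
      (c3 x) ^ 2 * abelDefect c0 c1 c2 c3 m (inflectionCurve c2 c3) x := by
  simp only [s3D, abelDefect, (hasDerivAt_inflectionCurve hc2 hc3 hc3x).deriv, inflectionCurve]
  field_simp
  ring

lemma s3D_one : s3D c0 c1 c2 c3 1 = s3 c0 c1 c2 c3 := by
  funext x
  simp only [s3D, s3, Pi.one_apply, inv_one, one_mul]

lemma abelDefect_gam {y : ℝ → ℝ} (hy : DifferentiableAt ℝ y x) (hu : DifferentiableAt ℝ u x)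
    (hv : DifferentiableAt ℝ v x) (hux : u x ≠ 0) (hmx : m x ≠ 0) :
    abelDefect (gam0 c0 c1 c2 c3 u v m) (gam1 c1 c2 c3 u v m) (gam2 c2 c3 u v m) (gam3 c3 u m) m
        (fun t => (y t - v t) / u t) x =
      abelDefect c0 c1 c2 c3 1 y x / (m x * u x) := by
  have deriv_eta : deriv (fun t => (y t - v t) / u t) x =
      ((deriv y x - deriv v x) * u x - (y x - v x) * deriv u x) / (u x) ^ 2 :=
    ((hy.hasDerivAt.fun_sub hv.hasDerivAt).fun_div hu.hasDerivAt hux).deriv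
  simp only [abelDefect, deriv_eta, gam0, gam1, gam2, gam3, Pi.one_apply]
  field_simp
  ring

lemma inflectionCurve_gam (hc3x : c3 x ≠ 0) (hux : u x ≠ 0) (hmx : m x ≠ 0) :
    inflectionCurve (gam2 c2 c3 u v m) (gam3 c3 u m) x = (inflectionCurve c2 c3 x - v x) / u x := by
  simp only [inflectionCurve, gam2, gam3]
  field_simp
  ring

lemma abelDefect_congr {y z : ℝ → ℝ} (h : y =ᶠ[𝓝 x] z) :
    abelDefect c0 c1 c2 c3 m y x = abelDefect c0 c1 c2 c3 m z x := by
  simp only [abelDefect, h.eq_of_nhds, h.deriv_eq]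

lemma abelDefect_gam_inflectionCurve (hc2 : DifferentiableAt ℝ c2 x)
    (hc3 : DifferentiableAt ℝ c3 x) (hu : DifferentiableAt ℝ u x) (hv : DifferentiableAt ℝ v x)
    (hm : ContinuousAt m x) (hc3x : c3 x ≠ 0) (hux : u x ≠ 0) (hmx : m x ≠ 0) :
    abelDefect (gam0 c0 c1 c2 c3 u v m) (gam1 c1 c2 c3 u v m) (gam2 c2 c3 u v m) (gam3 c3 u m) m
        (inflectionCurve (gam2 c2 c3 u v m) (gam3 c3 u m)) x =
      abelDefect c0 c1 c2 c3 1 (inflectionCurve c2 c3) x / (m x * u x) := by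
  have transformed_curve : inflectionCurve (gam2 c2 c3 u v m) (gam3 c3 u m) =ᶠ[𝓝 x]
      fun t => (inflectionCurve c2 c3 t - v t) / u t := by
    filter_upwards [hc3.continuousAt.eventually_ne hc3x, hu.continuousAt.eventually_ne hux,
      hm.eventually_ne hmx] with t hc3t hut hmt
    exact inflectionCurve_gam hc3t hut hmt
  rw [abelDefect_congr transformed_curve]
  exact abelDefect_gam (hasDerivAt_inflectionCurve hc2 hc3 hc3x).differentiableAt hu hv hux hmx

lemma differentiableAt_gam2 (hc2 : DifferentiableAt ℝ c2 x) (hc3 : DifferentiableAt ℝ c3 x)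
    (hu : DifferentiableAt ℝ u x) (hv : DifferentiableAt ℝ v x) (hm : DifferentiableAt ℝ m x)
    (hmx : m x ≠ 0) : DifferentiableAt ℝ (gam2 c2 c3 u v m) x :=
  (hu.fun_mul (hc2.fun_add (hc3.fun_mul hv))).fun_div hm hmx

lemma differentiableAt_gam3 (hc3 : DifferentiableAt ℝ c3 x) (hu : DifferentiableAt ℝ u x)
    (hm : DifferentiableAt ℝ m x) (hmx : m x ≠ 0) : DifferentiableAt ℝ (gam3 c3 u m) x :=
  ((hu.fun_pow 2).fun_mul hc3).fun_div hm hmx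

lemma gam3_ne_zero (hc3x : c3 x ≠ 0) (hux : u x ≠ 0) (hmx : m x ≠ 0) : gam3 c3 u m x ≠ 0 :=
  div_ne_zero (mul_ne_zero (pow_ne_zero 2 hux) hc3x) hmx

theorem s3D_gam (hc2 : DifferentiableAt ℝ c2 x) (hc3 : DifferentiableAt ℝ c3 x)
    (hu : DifferentiableAt ℝ u x) (hv : DifferentiableAt ℝ v x) (hm : DifferentiableAt ℝ m x)
    (hc3x : c3 x ≠ 0) (hux : u x ≠ 0) (hmx : m x ≠ 0) :
    s3D (gam0 c0 c1 c2 c3 u v m) (gam1 c1 c2 c3 u v m) (gam2 c2 c3 u v m) (gam3 c3 u m) m x =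
      (u x / m x) ^ 3 * s3 c0 c1 c2 c3 x := by
  rw [← s3D_one, s3D_eq_sq_mul_abelDefect hc2 hc3 hc3x,
    s3D_eq_sq_mul_abelDefect (differentiableAt_gam2 hc2 hc3 hu hv hm hmx)
      (differentiableAt_gam3 hc3 hu hm hmx) (gam3_ne_zero hc3x hux hmx),
    abelDefect_gam_inflectionCurve hc2 hc3 hu hv hm.continuousAt hc3x hux hmx, gam3]
  field_simp

lemma gam3_mul_div (w : ℝ) (hux : u x ≠ 0) :
    gam3 c3 u m x * (w / u x) = u x / m x * (c3 x * w) := by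
  simp only [gam3]
  field_simp

theorem J_absolute_invariant_general {U : ℝ → ℝ} (hc2 : DifferentiableAt ℝ c2 x)
    (hc3 : DifferentiableAt ℝ c3 x) (hu : DifferentiableAt ℝ u x) (hv : DifferentiableAt ℝ v x)
    (hm : DifferentiableAt ℝ m x) (hc3x : c3 x ≠ 0) (hux : u x ≠ 0) (hmx : m x ≠ 0)
    (hUx : U x ≠ 0) :
    s3D (gam0 c0 c1 c2 c3 u v m) (gam1 c1 c2 c3 u v m) (gam2 c2 c3 u v m) (gam3 c3 u m) m x
        / (gam3 c3 u m x * (U x / u x)) ^ 3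
      = s3 c0 c1 c2 c3 x / (c3 x * U x) ^ 3 := by
  have denominator_ne_zero : c3 x * U x ≠ 0 := mul_ne_zero hc3x hUx
  have weight_ne_zero : u x / m x ≠ 0 := div_ne_zero hux hmx
  rw [s3D_gam hc2 hc3 hu hv hm hc3x hux hmx, gam3_mul_div (U x) hux,
    div_eq_div_iff (pow_ne_zero 3 (mul_ne_zero weight_ne_zero denominator_ne_zero))
      (pow_ne_zero 3 denominator_ne_zero)]
  ring

end

/-- `J = s₃/(c₃U)³` is an absolute invariant: `J₁ = J`, where
`J₁ = (s₃)₁/(γ₃Ũ)³` and `Ũ = U/u`. -/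
theorem J_absolute_invariant
    (a b : ℝ) (c0 c1 c2 c3 u v m U : ℝ → ℝ)
    (hc0 : AnalyticOnNhd ℝ c0 (Ioo a b)) (hc1 : AnalyticOnNhd ℝ c1 (Ioo a b))
    (hc2 : AnalyticOnNhd ℝ c2 (Ioo a b)) (hc3 : AnalyticOnNhd ℝ c3 (Ioo a b))
    (hc30 : ∀ x ∈ Ioo a b, c3 x ≠ 0)
    (hu : AnalyticOnNhd ℝ u (Ioo a b)) (hv : AnalyticOnNhd ℝ v (Ioo a b))
    (hm : AnalyticOnNhd ℝ m (Ioo a b))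
    (hu0 : ∀ x ∈ Ioo a b, u x ≠ 0) (hm0 : ∀ x ∈ Ioo a b, m x ≠ 0)
    (hU : AnalyticOnNhd ℝ U (Ioo a b)) (hU0 : ∀ x ∈ Ioo a b, U x ≠ 0)
    (hUode : ∀ x ∈ Ioo a b, HasDerivAt U
      (((deriv c3 x + 3 * (c1 x * c3 x - (c2 x) ^ 2)) / c3 x) * U x) x) :
    ∀ x ∈ Ioo a b,
      s3D (gam0 c0 c1 c2 c3 u v m) (gam1 c1 c2 c3 u v m)
          (gam2 c2 c3 u v m) (gam3 c3 u m) m x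
        / (gam3 c3 u m x * (U x / u x)) ^ 3
      = s3 c0 c1 c2 c3 x / (c3 x * U x) ^ 3 :=
  fun x hx => J_absolute_invariant_general (hc2 x hx).differentiableAt (hc3 x hx).differentiableAt
    (hu x hx).differentiableAt (hv x hx).differentiableAt (hm x hx).differentiableAt
    (hc30 x hx) (hu0 x hx) (hm0 x hx) (hU0 x hx)
end

section
/- Let c_0, c_1, c_2, c_3 be real analytic on an open interval I with c_3 nowhere vanishing, let u, ν, μ be real analytic with u, μ nowhere vanishing, and let γ_1, γ_2, γ_3 be the transformed coefficients of the Abel equation, with D := μ⁻¹ d/dx. Then the quantity r := (c_3' + 3(c_1c_3 − c_2²))/c_3 transforms as an affine connection: on I, (Dγ_3 + 3(γ_1γ_3 − γ_2²))/γ_3 = (1/μ)·[ (c_3' + 3(c_1c_3 − c_2²))/c_3 + (u'/u − μ'/μ) ]; equivalently, μ·(Dγ_3 + 3(γ_1γ_3 − γ_2²))/γ_3 − (d/dx)log(u/μ) = (c_3' + 3(c_1c_3 − c_2²))/c_3. -/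
open Set

/-!
Split `r` into `c₃′/c₃` and `3(c₁c₃ − c₂²)/c₃`. Since `γ₃ = u²c₃/μ`, the logarithmic derivative
of `γ₃` is that of `c₃` plus `2u′/u − μ′/μ`. The shift by `ν` leaves `c₁c₃ − c₂²` unchanged, so the
second summand changes, up to the factor `1/μ`, only by the `−u′/u` coming from the term
`−u′/(3μu)` of `γ₁`. The total increment is `u′/u − μ′/μ`, the derivative of `log (u/μ)`.
-/

/-- The connection coefficient `r = (D c₃ + 3(c₁c₃ − c₂²))/c₃` of an Abel equation. The operator `D`
is differentiation with respect to the independent variable: `d/dx` for the original equation,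
`μ⁻¹ d/dx` for the transformed one. -/
noncomputable def abelConnection (D : (ℝ → ℝ) → ℝ → ℝ) (c1 c2 c3 : ℝ → ℝ) : ℝ → ℝ := fun x =>
  (D c3 x + 3 * (c1 x * c3 x - (c2 x) ^ 2)) / c3 x

theorem shift_mul_sub_shift_sq {R : Type*} [CommRing R] (c1 c2 c3 v : R) :
    (c1 + 2 * c2 * v + c3 * v ^ 2) * c3 - (c2 + c3 * v) ^ 2 = c1 * c3 - c2 ^ 2 := by
  ring

theorem deriv_log_div {f g : ℝ → ℝ} {x : ℝ} (hf : DifferentiableAt ℝ f x)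
    (hg : DifferentiableAt ℝ g x) (hf0 : f x ≠ 0) (hg0 : g x ≠ 0) :
    deriv (fun t => Real.log (f t / g t)) x = logDeriv f x - logDeriv g x :=
  (Real.deriv_log_comp_eq_logDeriv (hf.fun_div hg hg0) (div_ne_zero hf0 hg0)).trans
    (logDeriv_div x hf0 hg0 hf hg)

section Transformation

variable {c3 u m : ℝ → ℝ} {x : ℝ}

theorem logDeriv_gam3 (hc3 : DifferentiableAt ℝ c3 x) (hu : DifferentiableAt ℝ u x)
    (hm : DifferentiableAt ℝ m x) (hc30 : c3 x ≠ 0) (hu0 : u x ≠ 0) (hm0 : m x ≠ 0) :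
    logDeriv (gam3 c3 u m) x = 2 * logDeriv u x + logDeriv c3 x - logDeriv m x := by
  have hu2 : u x ^ 2 ≠ 0 := pow_ne_zero 2 hu0
  calc logDeriv (gam3 c3 u m) x
      = logDeriv (fun t => u t ^ 2 * c3 t) x - logDeriv m x :=
        logDeriv_div x (mul_ne_zero hu2 hc30) hm0 ((hu.fun_pow 2).fun_mul hc3) hm
    _ = logDeriv (fun t => u t ^ 2) x + logDeriv c3 x - logDeriv m x := by
        rw [logDeriv_mul x hu2 hc30 (hu.fun_pow 2) hc3]
    _ = 2 * logDeriv u x + logDeriv c3 x - logDeriv m x := by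
        rw [logDeriv_fun_pow hu, Nat.cast_ofNat]

theorem gam1_mul_gam3_sub_gam2_sq (c1 c2 v : ℝ → ℝ) (hu0 : u x ≠ 0) :
    gam1 c1 c2 c3 u v m x * gam3 c3 u m x - gam2 c2 c3 u v m x ^ 2
      = (u x / m x) ^ 2 * (c1 x * c3 x - c2 x ^ 2)
        - gam3 c3 u m x * logDeriv u x / (3 * m x) := by
  rw [← shift_mul_sub_shift_sq (c1 x) (c2 x) (c3 x) (v x), logDeriv_apply]
  simp only [gam1, gam2, gam3]
  field_simp
  ring

theorem abelConnection_gam (c1 c2 v : ℝ → ℝ) (hc3 : DifferentiableAt ℝ c3 x)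
    (hu : DifferentiableAt ℝ u x) (hm : DifferentiableAt ℝ m x)
    (hc30 : c3 x ≠ 0) (hu0 : u x ≠ 0) (hm0 : m x ≠ 0) :
    abelConnection (fun f t => (m t)⁻¹ * deriv f t)
        (gam1 c1 c2 c3 u v m) (gam2 c2 c3 u v m) (gam3 c3 u m) x
      = (1 / m x) * (abelConnection deriv c1 c2 c3 x + (logDeriv u x - logDeriv m x)) := by
  have hgam3 : gam3 c3 u m x ≠ 0 := div_ne_zero (mul_ne_zero (pow_ne_zero 2 hu0) hc30) hm0
  calc abelConnection (fun f t => (m t)⁻¹ * deriv f t)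
        (gam1 c1 c2 c3 u v m) (gam2 c2 c3 u v m) (gam3 c3 u m) x
      = (1 / m x) * (logDeriv (gam3 c3 u m) x - logDeriv u x)
          + 3 * (u x / m x) ^ 2 * (c1 x * c3 x - c2 x ^ 2) / gam3 c3 u m x := by
        rw [abelConnection, gam1_mul_gam3_sub_gam2_sq c1 c2 v hu0, logDeriv_apply (gam3 c3 u m)]
        field_simp
        ring
    _ = (1 / m x) * (logDeriv c3 x + 3 * (c1 x * c3 x - c2 x ^ 2) / c3 x
          + (logDeriv u x - logDeriv m x)) := by
        rw [logDeriv_gam3 hc3 hu hm hc30 hu0 hm0, gam3]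
        field_simp
        ring
    _ = (1 / m x) * (abelConnection deriv c1 c2 c3 x + (logDeriv u x - logDeriv m x)) := by
        rw [abelConnection, add_div, logDeriv_apply c3]

theorem connection_transformation_law_general (c1 c2 v : ℝ → ℝ) (hc3 : DifferentiableAt ℝ c3 x)
    (hu : DifferentiableAt ℝ u x) (hm : DifferentiableAt ℝ m x)
    (hc30 : c3 x ≠ 0) (hu0 : u x ≠ 0) (hm0 : m x ≠ 0) :
    abelConnection (fun f t => (m t)⁻¹ * deriv f t)
        (gam1 c1 c2 c3 u v m) (gam2 c2 c3 u v m) (gam3 c3 u m) x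
      = (1 / m x) * (abelConnection deriv c1 c2 c3 x + (deriv u x / u x - deriv m x / m x)) ∧
    m x * abelConnection (fun f t => (m t)⁻¹ * deriv f t)
        (gam1 c1 c2 c3 u v m) (gam2 c2 c3 u v m) (gam3 c3 u m) x
        - deriv (fun t => Real.log (u t / m t)) x
      = abelConnection deriv c1 c2 c3 x := by
  have law := abelConnection_gam c1 c2 v hc3 hu hm hc30 hu0 hm0
  refine ⟨law, ?_⟩
  rw [law, deriv_log_div hu hm hu0 hm0, ← mul_assoc, mul_one_div_cancel hm0, one_mul,
    add_sub_cancel_right]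

end Transformation

/-- `r = (c₃′ + 3(c₁c₃ − c₂²))/c₃` transforms as an affine connection under the
pseudo-group `y = uη + ν`, `dξ/dx = μ`. -/
theorem connection_transformation_law
    (a b : ℝ) (c0 c1 c2 c3 u v m : ℝ → ℝ)
    (hc0 : AnalyticOnNhd ℝ c0 (Ioo a b)) (hc1 : AnalyticOnNhd ℝ c1 (Ioo a b))
    (hc2 : AnalyticOnNhd ℝ c2 (Ioo a b)) (hc3 : AnalyticOnNhd ℝ c3 (Ioo a b))
    (hc30 : ∀ x ∈ Ioo a b, c3 x ≠ 0)
    (hu : AnalyticOnNhd ℝ u (Ioo a b)) (hv : AnalyticOnNhd ℝ v (Ioo a b))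
    (hm : AnalyticOnNhd ℝ m (Ioo a b))
    (hu0 : ∀ x ∈ Ioo a b, u x ≠ 0) (hm0 : ∀ x ∈ Ioo a b, m x ≠ 0) :
    ∀ x ∈ Ioo a b,
      (((m x)⁻¹ * deriv (gam3 c3 u m) x
          + 3 * (gam1 c1 c2 c3 u v m x * gam3 c3 u m x - (gam2 c2 c3 u v m x) ^ 2))
        / gam3 c3 u m x
        = (1 / m x) * ((deriv c3 x + 3 * (c1 x * c3 x - (c2 x) ^ 2)) / c3 x
            + (deriv u x / u x - deriv m x / m x))) ∧
      (m x * (((m x)⁻¹ * deriv (gam3 c3 u m) x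
          + 3 * (gam1 c1 c2 c3 u v m x * gam3 c3 u m x - (gam2 c2 c3 u v m x) ^ 2))
        / gam3 c3 u m x)
        - deriv (fun t => Real.log (u t / m t)) x
        = (deriv c3 x + 3 * (c1 x * c3 x - (c2 x) ^ 2)) / c3 x) := by
  exact fun x hx => connection_transformation_law_general c1 c2 v
    (hc3 x hx).differentiableAt (hu x hx).differentiableAt (hm x hx).differentiableAt
    (hc30 x hx) (hu0 x hx) (hm0 x hx)
end

section
/- Let u, ν, μ be real analytic on an open interval I with u, μ nowhere vanishing. Suppose the Abel equation is in canonical form, i.e. c_1 = c_2 = 0 and c_3 = 1 on I, and suppose the transformed coefficients also satisfy γ_1 = γ_2 = 0 and γ_3 = 1 on I, where γ_1 = (c_1 + 2c_2ν + c_3ν²)/μ − u'/(3μu), γ_2 = u(c_2 + c_3ν)/μ, γ_3 = u²c_3/μ. Then ν ≡ 0 on I, u is constant on I, and μ = u² is constant on I. Consequently, the most general transformation of the pseudo-group sending a canonical form dY/dX = Y³ + J to another canonical form is Z = KY, W = (X + h)/K² with constants K ≠ 0 and h. -/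
open Set

section PointwiseConditions

variable {c1 c2 c3 u v m : ℝ → ℝ} {x : ℝ}

lemma gam1_eq_zero_iff (hux : u x ≠ 0) (hmx : m x ≠ 0) :
    gam1 c1 c2 c3 u v m x = 0 ↔
      deriv u x = 3 * u x * (c1 x + 2 * c2 x * v x + c3 x * v x ^ 2) := by
  have gam1_eq_div : gam1 c1 c2 c3 u v m x =
      (3 * u x * (c1 x + 2 * c2 x * v x + c3 x * v x ^ 2) - deriv u x) / (3 * m x * u x) := by
    rw [gam1]
    field_simp
  have denom_ne_zero : 3 * m x * u x ≠ 0 := by positivity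
  rw [gam1_eq_div, div_eq_zero_iff, or_iff_left denom_ne_zero, sub_eq_zero, eq_comm]

lemma gam2_eq_zero_iff (hux : u x ≠ 0) (hmx : m x ≠ 0) :
    gam2 c2 c3 u v m x = 0 ↔ c2 x + c3 x * v x = 0 := by
  simp [gam2, hux, hmx]

lemma gam3_eq_one_iff (hmx : m x ≠ 0) : gam3 c3 u m x = 1 ↔ u x ^ 2 * c3 x = m x :=
  div_eq_one_iff_eq hmx

end PointwiseConditions

lemma exists_eq_smul_add_of_hasDerivAt_const {𝕜 G : Type*} [RCLike 𝕜] [NormedAddCommGroup G]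
    [NormedSpace 𝕜 G] {s : Set 𝕜} {f : 𝕜 → G} {c : G} (hs : IsOpen s) (hs' : IsPreconnected s)
    (hf : ∀ x ∈ s, HasDerivAt f c x) : ∃ h : G, ∀ x ∈ s, f x = x • c + h := by
  have hasDerivAt_smul_const (x : 𝕜) : HasDerivAt (fun y : 𝕜 => y • c) c x := by
    simpa using (hasDerivAt_id x).smul_const c
  exact hs.exists_eq_add_of_deriv_eq hs'
    (fun x hx => (hf x hx).differentiableAt.differentiableWithinAt)
    (fun x _ => (hasDerivAt_smul_const x).differentiableAt.differentiableWithinAt)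
    fun x hx => (hf x hx).deriv.trans (hasDerivAt_smul_const x).deriv.symm

theorem canonical_to_canonical_general {s : Set ℝ} (hs : IsOpen s) (hs' : IsConnected s)
    {u v m : ℝ → ℝ} (hu : DifferentiableOn ℝ u s) (hm0 : ∀ x ∈ s, m x ≠ 0)
    (hγ1 : ∀ x ∈ s, gam1 (fun _ => 0) (fun _ => 0) (fun _ => 1) u v m x = 0)
    (hγ2 : ∀ x ∈ s, gam2 (fun _ => 0) (fun _ => 1) u v m x = 0)
    (hγ3 : ∀ x ∈ s, gam3 (fun _ => 1) u m x = 1) :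
    (∀ x ∈ s, v x = 0) ∧
    ∃ K : ℝ, K ≠ 0 ∧ (∀ x ∈ s, u x = K) ∧ (∀ x ∈ s, m x = K ^ 2) ∧
      ∀ ξ : ℝ → ℝ, (∀ x ∈ s, HasDerivAt ξ (m x) x) →
        ∃ h : ℝ, ∀ x ∈ s, ξ x = K ^ 2 * x + h := by
  have sq_u_eq_m : ∀ x ∈ s, u x ^ 2 = m x := fun x hx => by
    simpa using (gam3_eq_one_iff (hm0 x hx)).1 (hγ3 x hx)
  have u_ne_zero : ∀ x ∈ s, u x ≠ 0 := fun x hx hux =>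
    hm0 x hx (by simp [← sq_u_eq_m x hx, hux])
  have v_eq_zero : ∀ x ∈ s, v x = 0 := fun x hx => by
    simpa using (gam2_eq_zero_iff (u_ne_zero x hx) (hm0 x hx)).1 (hγ2 x hx)
  have deriv_u_eq_zero : EqOn (deriv u) 0 s := fun x hx => by
    simpa [v_eq_zero x hx] using (gam1_eq_zero_iff (u_ne_zero x hx) (hm0 x hx)).1 (hγ1 x hx)
  obtain ⟨K, u_eq_K⟩ := hs.exists_is_const_of_deriv_eq_zero hs'.isPreconnected hu deriv_u_eq_zero
  obtain ⟨x₀, hx₀⟩ := hs'.nonempty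
  have m_eq_sq_K : ∀ x ∈ s, m x = K ^ 2 := fun x hx => by rw [← sq_u_eq_m x hx, u_eq_K x hx]
  refine ⟨v_eq_zero, K, u_eq_K x₀ hx₀ ▸ u_ne_zero x₀ hx₀, u_eq_K, m_eq_sq_K, fun ξ hξ => ?_⟩
  have hξK : ∀ x ∈ s, HasDerivAt ξ (K ^ 2) x := fun x hx => m_eq_sq_K x hx ▸ hξ x hx
  obtain ⟨h, ξ_eq⟩ := exists_eq_smul_add_of_hasDerivAt_const hs hs'.isPreconnected hξK
  exact ⟨h, fun x hx => by rw [ξ_eq x hx, smul_eq_mul, mul_comm]⟩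

/-- the only pseudo-group transformations sending a canonical form
(`c₁ = c₂ = 0`, `c₃ = 1`) to a canonical form (`γ₁ = γ₂ = 0`, `γ₃ = 1`) are
`ν ≡ 0`, `u ≡ K` constant, `μ ≡ K²`; hence `ξ = K²x + h`, i.e. `Z = KY`,
`W = (X + h)/K²` with constants `K ≠ 0`, `h`. -/
theorem canonical_to_canonical
    (a b : ℝ) (hab : a < b) (u v m : ℝ → ℝ)
    (hu : AnalyticOnNhd ℝ u (Ioo a b)) (hv : AnalyticOnNhd ℝ v (Ioo a b))
    (hm : AnalyticOnNhd ℝ m (Ioo a b))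
    (hu0 : ∀ x ∈ Ioo a b, u x ≠ 0) (hm0 : ∀ x ∈ Ioo a b, m x ≠ 0)
    (hγ1 : ∀ x ∈ Ioo a b, gam1 (fun _ => 0) (fun _ => 0) (fun _ => 1) u v m x = 0)
    (hγ2 : ∀ x ∈ Ioo a b, gam2 (fun _ => 0) (fun _ => 1) u v m x = 0)
    (hγ3 : ∀ x ∈ Ioo a b, gam3 (fun _ => 1) u m x = 1) :
    (∀ x ∈ Ioo a b, v x = 0) ∧
    ∃ K : ℝ, K ≠ 0 ∧ (∀ x ∈ Ioo a b, u x = K) ∧ (∀ x ∈ Ioo a b, m x = K ^ 2) ∧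
      ∀ ξ : ℝ → ℝ, (∀ x ∈ Ioo a b, HasDerivAt ξ (m x) x) →
        ∃ h : ℝ, ∀ x ∈ Ioo a b, ξ x = K ^ 2 * x + h :=
  canonical_to_canonical_general isOpen_Ioo (isConnected_Ioo hab) hu.differentiableOn hm0
    hγ1 hγ2 hγ3
end
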